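/- arXiv:math/9512217 — 4 statements merged into one kernel-verified Lean document; each statement's English description precedes it below -/
import Mathlib

section
/- Let c ∈ ℚ and f_c(z) = z² + c. Then f_c has both a rational fixed point and a rational point of exact period 2 if and only if c = −(3μ⁴ + 10μ² + 3)/(4(μ² − 1)²) for some μ ∈ ℚ with μ ∉ {−1, 0, 1}. Moreover, in that case one may take ρ = −(μ² + 1)/(μ² − 1) and σ = 2μ/(μ² − 1), so that c = 1/4 − ρ² = −3/4 − σ², the rational fixed points are 1/2 ± ρ, and the rational points of exact period 2 are −1/2 ± σ. -/
/-!
Completing the square, a fixed point `x` of `f_c` corresponds to `r = x - 1/2` with `c = 1/4 - r²`.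
Since `f_c²(z) - z = (z² - z + c)(z² + z + 1 + c)`, and the two factors share a root only at
`z = -1/2`, a point `y` of exact period 2 corresponds to `s = y + 1/2 ≠ 0` with `c = -3/4 - s²`
(`exactPeriod_two_iff`). Both exist over `ℚ` exactly when the conic `r² - s² = 1` has a rational
point with `s ≠ 0`. Projecting from `(r, s) = (-1, 0)` with slope `-μ` parametrizes the conic
(`exists_param`): `μ = 0` gives `(1, 0)`, and `μ = ±1` are the two points at infinity.
-/

/-- The quadratic map `f_c(z) = z^2 + c`. -/
def fc (c : ℚ) : ℚ → ℚ := fun z => z ^ 2 + c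

/-- `x` has exact period `m` under `f`: the `m`-th iterate returns to `x`,
and no earlier iterate (with `1 ≤ k < m`) does. -/
def ExactPeriod (f : ℚ → ℚ) (m : ℕ) (x : ℚ) : Prop :=
  f^[m] x = x ∧ ∀ k : ℕ, 1 ≤ k → k < m → f^[k] x ≠ x

/-- `x` is periodic under `f` if it has some exact period `m ≥ 1`. -/
def IsPeriodicPoint (f : ℚ → ℚ) (x : ℚ) : Prop :=
  ∃ m : ℕ, 1 ≤ m ∧ ExactPeriod f m x

/-- `x` is preperiodic under `f` if some iterate of `x` is periodic. -/
def IsPreperiodicPoint (f : ℚ → ℚ) (x : ℚ) : Prop :=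
  ∃ n : ℕ, IsPeriodicPoint f (f^[n] x)

/-- `x` has type `m_n` for `f`: `f^[n] x` has exact period `m`, and `n` is the
least nonnegative integer `k` such that `f^[k] x` is periodic. -/
def HasType (f : ℚ → ℚ) (m n : ℕ) (x : ℚ) : Prop :=
  ExactPeriod f m (f^[n] x) ∧ ∀ k : ℕ, k < n → ¬ IsPeriodicPoint f (f^[k] x)

theorem fixed_iff (c x : ℚ) : fc c x = x ↔ c = 1/4 - (x - 1/2)^2 := by
  unfold fc
  constructor <;> intro h <;> linear_combination h

theorem exactPeriod_two_iff (c y : ℚ) :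
    ExactPeriod (fc c) 2 y ↔ c = -3/4 - (y + 1/2)^2 ∧ y + 1/2 ≠ 0 := by
  have key : ExactPeriod (fc c) 2 y ↔ fc c (fc c y) = y ∧ fc c y ≠ y := by
    unfold ExactPeriod
    constructor
    · rintro ⟨h, h1⟩
      exact ⟨h, h1 1 le_rfl one_lt_two⟩
    · rintro ⟨h, h1⟩
      refine ⟨h, fun k hk hk2 => ?_⟩
      obtain rfl : k = 1 := by omega
      exact h1
  rw [key]
  unfold fc
  constructor
  · rintro ⟨h, h1⟩
    have hc : c = -3/4 - (y + 1/2)^2 := by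
      have h2 : (y^2 + c - y) * (y^2 + y + 1 + c) = 0 := by linear_combination h
      rcases mul_eq_zero.mp h2 with h3 | h3
      · exact absurd (sub_eq_zero.mp h3) h1
      · linear_combination h3
    refine ⟨hc, fun hy => h1 ?_⟩
    linear_combination hc - 2 * hy
  · rintro ⟨hc, hy⟩
    refine ⟨?_, fun h => hy ?_⟩
    · linear_combination (y^2 + c - y) * hc
    · linear_combination (hc - h) / 2

/-- The rational points of the conic `r² - s² = 1` with `s ≠ 0` are parametrized by the lines
through `(-1, 0)`. -/
theorem exists_param {r s : ℚ} (h : r^2 = 1 + s^2) (hs : s ≠ 0) :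
    ∃ μ : ℚ, μ ≠ -1 ∧ μ ≠ 0 ∧ μ ≠ 1 ∧ s = 2*μ / (μ^2 - 1) := by
  have hr : r + 1 ≠ 0 := by
    intro h0
    apply hs
    apply pow_eq_zero_iff (two_ne_zero) |>.mp
    linear_combination (r - 1) * h0 - h
  have hm : (-s / (r + 1))^2 - 1 = -2 / (r + 1) := by
    field_simp
    linear_combination -h
  have hne : (-s / (r + 1))^2 - 1 ≠ 0 := by
    rw [hm]
    exact div_ne_zero (by norm_num) hr
  refine ⟨-s / (r + 1), fun h1 => hne ?_, div_ne_zero (neg_ne_zero.mpr hs) hr,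
    fun h1 => hne ?_, ?_⟩
  · rw [h1]; norm_num
  · rw [h1]; norm_num
  · rw [hm]
    field_simp

theorem sq_sub_one_ne_zero {μ : ℚ} (h1 : μ ≠ -1) (h2 : μ ≠ 1) : μ^2 - 1 ≠ 0 := by
  have h : (μ + 1) * (μ - 1) ≠ 0 :=
    mul_ne_zero (fun h => h1 (by linear_combination h)) (sub_ne_zero.mpr h2)
  intro h0
  exact h (by linear_combination h0)

/-- `f_c` has both a rational fixed point and a rational point of exact period 2
iff `c = -(3μ⁴+10μ²+3)/(4(μ²-1)²)` for some `μ ∉ {-1,0,1}`; moreover, in that case, with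
`ρ = -(μ²+1)/(μ²-1)` and `σ = 2μ/(μ²-1)`, one has `c = 1/4 - ρ² = -3/4 - σ²`, the rational
fixed points are `1/2 ± ρ`, and the rational points of exact period 2 are `-1/2 ± σ`. -/
theorem stmt_3 (c : ℚ) :
    (((∃ x : ℚ, fc c x = x) ∧ (∃ y : ℚ, ExactPeriod (fc c) 2 y)) ↔
      ∃ μ : ℚ, μ ≠ -1 ∧ μ ≠ 0 ∧ μ ≠ 1 ∧
        c = -(3*μ^4 + 10*μ^2 + 3) / (4*(μ^2 - 1)^2)) ∧
    (∀ μ : ℚ, μ ≠ -1 → μ ≠ 0 → μ ≠ 1 →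
      c = -(3*μ^4 + 10*μ^2 + 3) / (4*(μ^2 - 1)^2) →
      ∀ ρ σ : ℚ, ρ = -(μ^2 + 1) / (μ^2 - 1) → σ = 2*μ / (μ^2 - 1) →
        c = 1/4 - ρ^2 ∧ c = -3/4 - σ^2 ∧
        {x : ℚ | fc c x = x} = {1/2 + ρ, 1/2 - ρ} ∧
        {x : ℚ | ExactPeriod (fc c) 2 x} = {-1/2 + σ, -1/2 - σ}) := by
  have main : ∀ μ : ℚ, μ ≠ -1 → μ ≠ 0 → μ ≠ 1 →
      c = -(3*μ^4 + 10*μ^2 + 3) / (4*(μ^2 - 1)^2) →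
      ∀ ρ σ : ℚ, ρ = -(μ^2 + 1) / (μ^2 - 1) → σ = 2*μ / (μ^2 - 1) →
        c = 1/4 - ρ^2 ∧ c = -3/4 - σ^2 ∧
        {x : ℚ | fc c x = x} = {1/2 + ρ, 1/2 - ρ} ∧
        {x : ℚ | ExactPeriod (fc c) 2 x} = {-1/2 + σ, -1/2 - σ} := by
    intro μ h1 h0 h2 hc ρ σ hρ hσ
    have hμ := sq_sub_one_ne_zero h1 h2
    have hcρ : c = 1/4 - ρ^2 := by
      rw [hc, hρ]
      field_simp
      ring
    have hcσ : c = -3/4 - σ^2 := by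
      rw [hc, hσ]
      field_simp
      ring
    have hσ0 : σ ≠ 0 := by
      rw [hσ]
      exact div_ne_zero (mul_ne_zero two_ne_zero h0) hμ
    refine ⟨hcρ, hcσ, ?_, ?_⟩
    · ext x
      simp only [Set.mem_ofPred_eq, Set.mem_insert_iff, Set.mem_singleton_iff, fixed_iff]
      constructor
      · intro h
        have h' : (x - 1/2)^2 = ρ^2 := by linear_combination h - hcρ
        rcases sq_eq_sq_iff_eq_or_eq_neg.mp h' with h' | h'
        · left; linear_combination h'
        · right; linear_combination h'
      · rintro (rfl | rfl) <;> linear_combination hcρ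
    · ext y
      simp only [Set.mem_ofPred_eq, Set.mem_insert_iff, Set.mem_singleton_iff,
        exactPeriod_two_iff]
      constructor
      · rintro ⟨h, -⟩
        have h' : (y + 1/2)^2 = σ^2 := by linear_combination h - hcσ
        rcases sq_eq_sq_iff_eq_or_eq_neg.mp h' with h' | h'
        · left; linear_combination h'
        · right; linear_combination h'
      · rintro (rfl | rfl)
        · exact ⟨by linear_combination hcσ, fun h => hσ0 (by linear_combination h)⟩
        · exact ⟨by linear_combination hcσ, fun h => hσ0 (by linear_combination -h)⟩
  refine ⟨⟨?_, ?_⟩, main⟩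
  · rintro ⟨⟨x, hx⟩, y, hy⟩
    rw [fixed_iff] at hx
    obtain ⟨hy, hs⟩ := (exactPeriod_two_iff c y).mp hy
    obtain ⟨μ, h1, h0, h2, hμ⟩ :=
      exists_param (r := x - 1/2) (s := y + 1/2) (by linear_combination hx - hy) hs
    refine ⟨μ, h1, h0, h2, ?_⟩
    have hne := sq_sub_one_ne_zero h1 h2
    rw [hy, hμ]
    field_simp
    ring
  · rintro ⟨μ, h1, h0, h2, hc⟩
    obtain ⟨-, -, hfix, hper⟩ := main μ h1 h0 h2 hc _ _ rfl rfl
    exact ⟨⟨_, hfix.ge (Set.mem_insert _ _)⟩, ⟨_, hper.ge (Set.mem_insert _ _)⟩⟩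
end

section
/- Let c ∈ ℚ, f_c(z) = z² + c, and m ≥ 1. The number of rational points of type m₁ for f_c equals the number of rational points of exact period m for f_c, except in the two cases (c, m) = (−1, 2) and (c, m) = (0, 1), in each of which the number of rational points of type m₁ is one less than the number of rational points of exact period m. -/
open Function Polynomial

theorem exactPeriod_iff_minimalPeriod (f : ℚ → ℚ) {m : ℕ} (hm : 1 ≤ m) (x : ℚ) :
    ExactPeriod f m x ↔ minimalPeriod f x = m := by
  constructor
  · rintro ⟨h1, h2⟩
    have hp : IsPeriodicPt f m x := h1
    refine le_antisymm (hp.minimalPeriod_le hm) ?_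
    by_contra! hlt
    exact h2 _ (hp.minimalPeriod_pos hm) hlt (isPeriodicPt_minimalPeriod f x)
  · rintro rfl
    refine ⟨isPeriodicPt_minimalPeriod f x, fun k hk hlt hx => ?_⟩
    have hp : IsPeriodicPt f k x := hx
    exact absurd (hp.minimalPeriod_le hk) (not_le.mpr hlt)

theorem isPeriodicPoint_iff_mem (f : ℚ → ℚ) (x : ℚ) :
    IsPeriodicPoint f x ↔ x ∈ periodicPts f := by
  constructor
  · rintro ⟨m, hm, h, -⟩
    exact ⟨m, hm, h⟩
  · intro h
    have hpos := minimalPeriod_pos_of_mem_periodicPts h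
    exact ⟨_, hpos, (exactPeriod_iff_minimalPeriod f hpos x).2 rfl⟩

theorem ExactPeriod.mem_periodicPts {f : ℚ → ℚ} {m : ℕ} (hm : 1 ≤ m) {x : ℚ}
    (h : ExactPeriod f m x) : x ∈ periodicPts f :=
  ⟨m, hm, h.1⟩

theorem fc_neg (c x : ℚ) : fc c (-x) = fc c x := by
  simp [fc]

theorem hasType_set_eq (c : ℚ) {m : ℕ} (hm : 1 ≤ m) :
    {x : ℚ | HasType (fc c) m 1 x} =
      (fun x => -x) '' ({x : ℚ | ExactPeriod (fc c) m x} \ {0}) := by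
  have hbij := bijOn_periodicPts (fc c)
  ext x
  constructor
  · rintro ⟨h1, h2⟩
    have h1 : ExactPeriod (fc c) m (fc c x) := h1
    have hx : x ∉ periodicPts (fc c) := fun h =>
      h2 0 one_pos ((isPeriodicPoint_iff_mem _ _).2 h)
    obtain ⟨y, hy, hyx⟩ := hbij.surjOn (h1.mem_periodicPts hm)
    have hsq : y ^ 2 = x ^ 2 := by simpa [fc] using hyx
    have hyneg : y = -x := by
      rcases sq_eq_sq_iff_eq_or_eq_neg.1 hsq with rfl | h
      · exact absurd hy hx
      · exact h
    refine ⟨y, ⟨?_, ?_⟩, by simp [hyneg]⟩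
    · rw [← hyx, exactPeriod_iff_minimalPeriod _ hm, minimalPeriod_apply hy] at h1
      exact (exactPeriod_iff_minimalPeriod _ hm y).2 h1
    · rintro rfl
      apply hx
      have : x = 0 := by linarith
      rwa [this]
  · rintro ⟨y, ⟨hy, hy0⟩, rfl⟩
    have hyp := ExactPeriod.mem_periodicPts hm hy
    refine ⟨?_, fun k hk hper => ?_⟩
    · change ExactPeriod (fc c) m (fc c (-y))
      rw [fc_neg, exactPeriod_iff_minimalPeriod _ hm, minimalPeriod_apply hyp]
      exact (exactPeriod_iff_minimalPeriod _ hm y).1 hy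
    · obtain rfl : k = 0 := by omega
      have hmem : -y ∈ periodicPts (fc c) := (isPeriodicPoint_iff_mem _ _).1 hper
      have : -y = y := hbij.injOn hmem hyp (fc_neg c y)
      apply hy0
      have : y = 0 := by linarith
      simpa using this

/-- The orbit of the critical point as a polynomial in the parameter: the value of `critPoly n`
at `c` is `f_c^[n+1] 0`. The shift makes every member of the sequence monic. -/
noncomputable def critPoly : ℕ → ℤ[X]
  | 0 => X
  | n + 1 => critPoly n ^ 2 + X

theorem critPoly_monic (n : ℕ) : (critPoly n).Monic ∧ 1 ≤ (critPoly n).natDegree := by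
  induction n with
  | zero => exact ⟨monic_X, by simp [critPoly]⟩
  | succ n ih =>
    obtain ⟨h1, h2⟩ := ih
    have hsq := h1.pow 2
    have hdeg : (critPoly n ^ 2).natDegree = 2 * (critPoly n).natDegree := h1.natDegree_pow 2
    have hlt : (X : ℤ[X]).natDegree < (critPoly n ^ 2).natDegree := by
      rw [hdeg, natDegree_X]; omega
    refine ⟨hsq.add_of_left (degree_lt_degree hlt), ?_⟩
    rw [critPoly, natDegree_add_eq_left_of_natDegree_lt hlt, hdeg]
    omega

theorem aeval_critPoly (c : ℚ) (n : ℕ) : aeval c (critPoly n) = (fc c)^[n + 1] 0 := by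
  induction n with
  | zero => simp [critPoly, fc]
  | succ n ih =>
    rw [iterate_succ_apply', ← ih]
    simp [critPoly, fc]

theorem exists_int_of_periodic_zero {c : ℚ} {n : ℕ} (h : (fc c)^[n + 1] 0 = 0) :
    ∃ k : ℤ, (k : ℚ) = c := by
  have hint : IsIntegral ℤ c :=
    ⟨critPoly n, (critPoly_monic n).1, by rw [← aeval_def, aeval_critPoly, h]⟩
  simpa using IsIntegrallyClosed.isIntegral_iff.1 hint

theorem iterate_zero_pos {c : ℚ} (hc : 0 < c) (n : ℕ) : 0 < (fc c)^[n + 1] 0 := by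
  rw [iterate_succ_apply']
  simp only [fc]
  positivity

/-- For `c ≤ -2` the half-line `[-c, ∞)` is forward invariant and contains `f_c^[2] 0`. -/
theorem neg_le_iterate_zero {c : ℚ} (hc : c ≤ -2) (n : ℕ) : -c ≤ (fc c)^[n + 2] 0 := by
  induction n with
  | zero =>
    simp only [iterate_succ_apply', iterate_zero, id, fc]
    nlinarith
  | succ n ih =>
    rw [show n + 1 + 2 = (n + 2) + 1 from rfl, iterate_succ_apply']
    simp only [fc]
    nlinarith

theorem exactPeriod_zero_iff (c : ℚ) {m : ℕ} (hm : 1 ≤ m) :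
    ExactPeriod (fc c) m 0 ↔ ((c = -1 ∧ m = 2) ∨ (c = 0 ∧ m = 1)) := by
  constructor
  · rintro ⟨h1, h2⟩
    obtain ⟨n, rfl⟩ : ∃ n, m = n + 1 := ⟨m - 1, by omega⟩
    obtain ⟨k, rfl⟩ := exists_int_of_periodic_zero h1
    have hk0 : k ≤ 0 := by
      by_contra! hk
      exact (iterate_zero_pos (c := (k : ℚ)) (by exact_mod_cast hk) n).ne' h1
    have hk2 : -2 < k := by
      by_contra! hk
      have hk' : (k : ℚ) ≤ -2 := by exact_mod_cast hk
      rcases n with _ | n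
      · have : (k : ℚ) = 0 := by simpa [fc] using h1
        linarith
      · have := neg_le_iterate_zero hk' n
        have hzero : (fc k)^[n + 2] 0 = 0 := h1
        linarith
    obtain rfl | rfl : k = -1 ∨ k = 0 := by omega
    · left
      refine ⟨by norm_num, ?_⟩
      by_contra hne
      rcases n with _ | n
      · norm_num [fc] at h1
      · exact h2 2 (by omega) (by omega) (by norm_num [fc])
    · right
      refine ⟨by norm_num, ?_⟩
      by_contra hne
      exact h2 1 le_rfl (by omega) (by norm_num [fc])
  · rintro (⟨rfl, rfl⟩ | ⟨rfl, rfl⟩)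
    · refine ⟨by norm_num [fc], fun k hk hk2 => ?_⟩
      obtain rfl : k = 1 := by omega
      norm_num [fc]
    · exact ⟨by norm_num [fc], fun k hk hk2 => by omega⟩

/-- In the exceptional cases the finiteness of the set of points of exact period `m` is needed,
as `Set.ncard` of an infinite set is `0`. -/
theorem exactPeriod_finite {c : ℚ} {m : ℕ} (h : (c = -1 ∧ m = 2) ∨ (c = 0 ∧ m = 1)) :
    {x : ℚ | ExactPeriod (fc c) m x}.Finite := by
  rcases h with ⟨rfl, rfl⟩ | ⟨rfl, rfl⟩
  · refine (Set.toFinite {0, -1}).subset ?_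
    rintro x ⟨h1, h2⟩
    have hfix := h2 1 le_rfl one_lt_two
    simp only [iterate_succ_apply', iterate_zero, id, fc] at h1 hfix
    -- The equation for `f^[2] x = x` factors through the fixed-point equation.
    have hfac : (x * (x + 1)) * (x ^ 2 + -1 - x) = 0 := by linear_combination h1
    rcases mul_eq_zero.1 hfac with h | h
    · rcases mul_eq_zero.1 h with h | h
      · simp [h]
      · right; exact eq_neg_of_add_eq_zero_left h
    · exact absurd (sub_eq_zero.1 h) hfix
  · refine (Set.toFinite {0, 1}).subset ?_
    rintro x ⟨h1, -⟩
    simp only [iterate_succ_apply', iterate_zero, id, fc] at h1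
    have hfac : x * (x - 1) = 0 := by linear_combination h1
    rcases mul_eq_zero.1 hfac with h | h
    · simp [h]
    · right; exact sub_eq_zero.1 h

/-- the number of rational points of type `m₁` for `f_c` equals the number of
rational points of exact period `m`, except when `(c, m) = (-1, 2)` or `(c, m) = (0, 1)`, in
which cases the number of points of type `m₁` is one less. -/
theorem stmt_6 (c : ℚ) (m : ℕ) (hm : 1 ≤ m) :
    (¬ ((c = -1 ∧ m = 2) ∨ (c = 0 ∧ m = 1)) →
      {x : ℚ | HasType (fc c) m 1 x}.ncard = {x : ℚ | ExactPeriod (fc c) m x}.ncard) ∧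
    (((c = -1 ∧ m = 2) ∨ (c = 0 ∧ m = 1)) →
      {x : ℚ | HasType (fc c) m 1 x}.ncard + 1 = {x : ℚ | ExactPeriod (fc c) m x}.ncard) := by
  rw [hasType_set_eq c hm, Set.ncard_image_of_injective _ neg_injective,
    ← exactPeriod_zero_iff c hm]
  refine ⟨fun h => ?_, fun h => ?_⟩
  · rw [Set.sdiff_singleton_eq_self (show (0 : ℚ) ∉ {x : ℚ | ExactPeriod (fc c) m x} from h)]
  · exact Set.ncard_sdiff_singleton_add_one h
      (exactPeriod_finite ((exactPeriod_zero_iff c hm).1 h))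
end

section
/- The set of rational solutions (η, t) ∈ ℚ × ℚ of the equation t² = −η⁴ + 2η² + 3 is exactly {(1, 2), (1, −2), (−1, 2), (−1, −2)}. -/
/-!
Write `η = a / b` in lowest terms. Since `3 + 2η² - η⁴ = (η² + 1)(3 - η²)`, the integer
`(a² + b²)(3b² - a²)` is a square, and the gcd of the two factors divides `4`.

* If `a² + b²` is odd, both factors are squares, and `a² + v² = 3b²` is impossible modulo `3`.
* Otherwise `a`, `b` are odd and both factors are twice a square: `a² + b² = 2u²` and
  `3b² - a² = 2v²`. Then `a², u², b², v²` is an arithmetic progression of four squares, which by a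
  theorem of Fermat is constant, so `η = ±1`.

Fermat's theorem (`four_squares`) is reduced to Euler's: `x⁴ - x²y² + y⁴ = z²` forces `xy = 0` or
`x² = y²` (`quartic`). For coprime `x`, `y` of opposite parity, `(x² - y², xy, z)` is a primitive
Pythagorean triple; parametrizing it and refining the factorizations gives
`α² + δ² = γ²`, `α² + 4δ² = β²` with `y = 2γδ`. Parametrizing the second equation as
`α = p² - q²`, `δ = pq` turns the first into `p⁴ - p²q² + q⁴ = γ²`, a smaller solution
(`quartic_descent`).
-/

lemma three_dvd_of_sq_add_sq {a b : ℤ} (h : (3 : ℤ) ∣ a ^ 2 + b ^ 2) : 3 ∣ a ∧ 3 ∣ b := by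
  have key : ∀ x y : ZMod 3, x ^ 2 + y ^ 2 = 0 → x = 0 ∧ y = 0 := by decide
  have := key a b (by
    have := (ZMod.intCast_zmod_eq_zero_iff_dvd (a ^ 2 + b ^ 2) 3).2 (by exact_mod_cast h)
    exact_mod_cast this)
  simpa [ZMod.intCast_zmod_eq_zero_iff_dvd] using this

/-- For `x` odd, `y` even and coprime, a solution of the quartic has `y = 0`, by descent: if
`y ≠ 0` there is a solution of the same kind with a strictly smaller nonzero even entry. The
induction is on `N = |y|`. -/
lemma quartic_descent (N : ℕ) : ∀ x y z : ℤ, y.natAbs = N → IsCoprime x y → x % 2 = 1 →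
    y % 2 = 0 → x ^ 4 - x ^ 2 * y ^ 2 + y ^ 4 = z ^ 2 → y = 0 := by
  induction N using Nat.strong_induction_on with
  | _ N ih =>
  intro x y z hN hco hx hy h
  by_contra hy0
  have hz0 : z ≠ 0 := by
    rintro rfl
    nlinarith [sq_nonneg (x ^ 2 - y ^ 2), sq_nonneg (x ^ 2 + y ^ 2), pow_pos (sq_pos_of_ne_zero hy0) 2]
  obtain ⟨y', rfl⟩ : (2 : ℤ) ∣ y := Int.dvd_of_emod_eq_zero hy
  have hpt : PythagoreanTriple (x ^ 2 - (2 * y') ^ 2) (x * (2 * y')) |z| := by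
    unfold PythagoreanTriple
    rw [abs_mul_abs_self]
    linear_combination h
  have hcop : IsCoprime (x ^ 2 - (2 * y') ^ 2) (x * (2 * y')) := by
    refine IsCoprime.mul_right ?_ ?_
    · have : IsCoprime (-(2 * y') ^ 2 + x * x) x :=
        IsCoprime.add_mul_left_left (hco.symm.pow_left.neg_left) x
      convert this using 1; ring
    · have : IsCoprime (x ^ 2 + (2 * y') * (-(2 * y'))) (2 * y') :=
        IsCoprime.add_mul_left_left (hco.pow_left) _
      convert this using 1; ring
  have hodd : (x ^ 2 - (2 * y') ^ 2) % 2 = 1 := by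
    have : Odd (x ^ 2 - (2 * y') ^ 2) :=
      ((Int.odd_iff.2 hx).pow).sub_even ((even_two_mul y').pow_of_ne_zero two_ne_zero)
    exact Int.odd_iff.1 this
  obtain ⟨m, n, h1, h2, -, hmn, -, -⟩ := hpt.coprime_classification'
    (Int.isCoprime_iff_gcd_eq_one.1 hcop) hodd (abs_pos.2 hz0)
  rw [← Int.isCoprime_iff_gcd_eq_one] at hmn
  have hx0 : x ≠ 0 := by rintro rfl; simp at hx
  -- Refine the equal products `x * y' = m * n` to `x = α β`, `y' = γ δ`, `m = α γ`, `n = β δ`.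
  obtain ⟨α, β, γ, hα0, hβγ, rfl, rfl⟩ : ∃ α β γ : ℤ, α ≠ 0 ∧ IsCoprime β γ ∧
      x = α * β ∧ m = α * γ := by
    obtain ⟨β, γ, hc, e1, e2⟩ := Int.exists_gcd_one (m := x) (n := m)
      (Int.gcd_pos_of_ne_zero_left _ hx0)
    have hg := Int.gcd_pos_of_ne_zero_left m hx0
    exact ⟨Int.gcd x m, β, γ, by exact_mod_cast hg.ne', Int.isCoprime_iff_gcd_eq_one.2 hc,
      by rw [mul_comm]; exact e1, by rw [mul_comm]; exact e2⟩
  have h3 : β * y' = γ * n := by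
    apply mul_left_cancel₀ (mul_ne_zero two_ne_zero hα0)
    linear_combination h2
  obtain ⟨δ, rfl⟩ : β ∣ n := hβγ.dvd_of_dvd_mul_left ⟨y', h3.symm⟩
  have hβ0 : β ≠ 0 := right_ne_zero_of_mul hx0
  obtain rfl : y' = γ * δ := by
    apply mul_left_cancel₀ hβ0
    linear_combination h3
  have hαδ : IsCoprime α δ := hmn.of_mul_left_left.of_mul_right_right
  have h4 : β ^ 2 * (α ^ 2 + δ ^ 2) = γ ^ 2 * (α ^ 2 + 4 * δ ^ 2) := by
    linear_combination h1
  obtain ⟨k, hk⟩ : γ ^ 2 ∣ α ^ 2 + δ ^ 2 :=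
    (hβγ.symm.pow (m := 2) (n := 2)).dvd_of_dvd_mul_left ⟨_, h4⟩
  have hγ0 : γ ≠ 0 := by rintro rfl; simp at hy0
  have hδ0 : δ ≠ 0 := by rintro rfl; simp at hy0
  have hk' : α ^ 2 + 4 * δ ^ 2 = β ^ 2 * k := by
    apply mul_left_cancel₀ (pow_ne_zero 2 hγ0)
    linear_combination -h4 + β ^ 2 * hk
  -- `k` divides both `3 * δ ^ 2` and `3 * α ^ 2`.
  have hk3 : k ∣ 3 := by
    obtain ⟨c, d, hcd⟩ := hαδ.pow (m := 2) (n := 2)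
    refine ⟨c * (4 * γ ^ 2 - β ^ 2) + d * (β ^ 2 - γ ^ 2), ?_⟩
    linear_combination -3 * hcd + c * (4 * hk - hk') + d * (hk' - hk)
  have hk0 : 0 < k := by
    have : 0 < γ ^ 2 * k := by rw [← hk]; positivity
    exact pos_of_mul_pos_right this (sq_nonneg _)
  have hk1 : k = 1 := by
    have := Int.le_of_dvd (by norm_num) hk3
    interval_cases k
    · rfl
    · norm_num at hk3
    · exfalso
      -- A sum of two coprime squares is prime to `3`.
      obtain ⟨e1, e2⟩ : (3 : ℤ) ∣ α ∧ (3 : ℤ) ∣ δ := three_dvd_of_sq_add_sq ⟨γ ^ 2, by rw [hk]; ring⟩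
      have := hαδ.isUnit_of_dvd' e1 e2
      norm_num [Int.isUnit_iff] at this
  subst hk1
  have hα2 : α % 2 = 1 := by
    have := Int.odd_iff.2 hx
    rw [Int.odd_mul] at this
    exact Int.odd_iff.1 this.1
  have hpt2 : PythagoreanTriple α (2 * δ) |β| := by
    unfold PythagoreanTriple
    rw [abs_mul_abs_self]
    linear_combination hk'
  have hcop2 : IsCoprime α (2 * δ) := by
    refine IsCoprime.mul_right ⟨1, -(α / 2), ?_⟩ hαδ
    omega
  obtain ⟨p, q, e1, e2, -, hpq, hpar, -⟩ := hpt2.coprime_classification'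
    (Int.isCoprime_iff_gcd_eq_one.1 hcop2) hα2 (abs_pos.2 hβ0)
  rw [← Int.isCoprime_iff_gcd_eq_one] at hpq
  obtain rfl : δ = p * q := by linarith
  have hp0 : p ≠ 0 := left_ne_zero_of_mul hδ0
  have hq0 : q ≠ 0 := right_ne_zero_of_mul hδ0
  have h5 : p ^ 4 - p ^ 2 * q ^ 2 + q ^ 4 = γ ^ 2 := by
    rw [e1] at hk
    linear_combination hk
  have hP := Int.natAbs_pos.2 hp0
  have hQ := Int.natAbs_pos.2 hq0
  have hG := Int.natAbs_pos.2 hγ0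
  simp only [Int.natAbs_mul] at hN
  have hGP : 0 < γ.natAbs * p.natAbs := by positivity
  have hGQ : 0 < γ.natAbs * q.natAbs := by positivity
  have hN' : 2 * (γ.natAbs * (p.natAbs * q.natAbs)) = N := hN
  rcases hpar with ⟨hp, hq⟩ | ⟨hp, hq⟩
  · exact hp0 (ih p.natAbs (by nlinarith) q p γ rfl hpq.symm hq hp (by linear_combination h5))
  · exact hq0 (ih q.natAbs (by nlinarith) p q γ rfl hpq hp hq h5)

lemma quartic_opposite_parity {x y z : ℤ} (hco : IsCoprime x y)
    (hpar : x % 2 = 0 ∧ y % 2 = 1 ∨ x % 2 = 1 ∧ y % 2 = 0)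
    (h : x ^ 4 - x ^ 2 * y ^ 2 + y ^ 4 = z ^ 2) : x * y = 0 := by
  rcases hpar with ⟨hx, hy⟩ | ⟨hx, hy⟩
  · rw [quartic_descent _ y x z rfl hco.symm hy hx (by linear_combination h), zero_mul]
  · rw [quartic_descent _ x y z rfl hco hx hy h, mul_zero]

/-- Two odd entries are carried to a solution of opposite parity by parametrizing the Pythagorean
triple `(x * y, x ^ 2 - y ^ 2, z)`. -/
lemma quartic_coprime {x y z : ℤ} (hco : IsCoprime x y)
    (h : x ^ 4 - x ^ 2 * y ^ 2 + y ^ 4 = z ^ 2) : x * y = 0 ∨ x ^ 2 = y ^ 2 := by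
  rcases Int.emod_two_eq_zero_or_one x with hx | hx <;>
    rcases Int.emod_two_eq_zero_or_one y with hy | hy
  · have := hco.isUnit_of_dvd' (Int.dvd_of_emod_eq_zero hx) (Int.dvd_of_emod_eq_zero hy)
    norm_num [Int.isUnit_iff] at this
  · exact Or.inl (quartic_opposite_parity hco (Or.inl ⟨hx, hy⟩) h)
  · exact Or.inl (quartic_opposite_parity hco (Or.inr ⟨hx, hy⟩) h)
  right
  have hxy : Odd (x * y) := (Int.odd_iff.2 hx).mul (Int.odd_iff.2 hy)
  have hz0 : z ≠ 0 := by
    rintro rfl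
    have : 0 < (x * y) ^ 2 := by
      have : x * y ≠ 0 := by intro h0; rw [h0] at hxy; simp at hxy
      positivity
    nlinarith [sq_nonneg (x ^ 2 - y ^ 2)]
  have hpt : PythagoreanTriple (x * y) (x ^ 2 - y ^ 2) |z| := by
    unfold PythagoreanTriple
    rw [abs_mul_abs_self]
    linear_combination h
  have hcop : IsCoprime (x * y) (x ^ 2 - y ^ 2) := by
    refine IsCoprime.mul_left ?_ ?_
    · have : IsCoprime x (-y ^ 2 + x * x) :=
        IsCoprime.add_mul_left_right (hco.pow_right.neg_right) x
      convert this using 1; ring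
    · have : IsCoprime y (x ^ 2 + y * (-y)) :=
        IsCoprime.add_mul_left_right (hco.symm.pow_right) _
      convert this using 1; ring
  obtain ⟨m, n, h1, h2, -, hmn, hpar, -⟩ := hpt.coprime_classification'
    (Int.isCoprime_iff_gcd_eq_one.1 hcop) (Int.odd_iff.1 hxy) (abs_pos.2 hz0)
  rw [← Int.isCoprime_iff_gcd_eq_one] at hmn
  obtain ⟨w, hw⟩ : Even (x ^ 2 + y ^ 2) :=
    ((Int.odd_iff.2 hx).pow).add_odd ((Int.odd_iff.2 hy).pow)
  have h5 : m ^ 4 - m ^ 2 * n ^ 2 + n ^ 4 = w ^ 2 := by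
    have : 4 * (m ^ 4 - m ^ 2 * n ^ 2 + n ^ 4) = 4 * w ^ 2 := by
      linear_combination -4 * (x * y + (m ^ 2 - n ^ 2)) * h1 - (x ^ 2 - y ^ 2 + 2 * m * n) * h2
        + (x ^ 2 + y ^ 2 + 2 * w) * hw
    linarith
  have := quartic_opposite_parity hmn hpar h5
  linear_combination h2 + 2 * this

lemma quartic {x y z : ℤ} (h : x ^ 4 - x ^ 2 * y ^ 2 + y ^ 4 = z ^ 2) :
    x * y = 0 ∨ x ^ 2 = y ^ 2 := by
  by_cases hx : x = 0
  · simp [hx]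
  have hg := Int.gcd_pos_of_ne_zero_left y hx
  obtain ⟨a, b, hc, e1, e2⟩ := Int.exists_gcd_one hg
  have hg' : ((Int.gcd x y : ℕ) : ℤ) ≠ 0 := by exact_mod_cast hg.ne'
  generalize ((Int.gcd x y : ℕ) : ℤ) = g at *
  subst e1 e2
  obtain ⟨w, rfl⟩ : g ^ 2 ∣ z := by
    rw [← Int.pow_dvd_pow_iff (two_ne_zero)]
    exact ⟨a ^ 4 - a ^ 2 * b ^ 2 + b ^ 4, by linear_combination -h⟩
  have h' : a ^ 4 - a ^ 2 * b ^ 2 + b ^ 4 = w ^ 2 := by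
    apply mul_left_cancel₀ (pow_ne_zero 4 hg')
    linear_combination h
  rcases quartic_coprime (Int.isCoprime_iff_gcd_eq_one.2 hc) h' with h0 | h0
  · left; linear_combination g ^ 2 * h0
  · right; linear_combination g ^ 2 * h0

/-- Fermat: four squares `a ^ 2, u ^ 2, b ^ 2, v ^ 2` in arithmetic progression are equal. -/
lemma four_squares {a b u v : ℤ} (h1 : a ^ 2 + b ^ 2 = 2 * u ^ 2)
    (h2 : u ^ 2 + v ^ 2 = 2 * b ^ 2) : a ^ 2 = b ^ 2 := by
  -- With `r = b - a`, `s = b + a`, `p = v + u`, `q = v - u` the progression reads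
  -- `r s = p q` and `(r + s) ^ 2 = p ^ 2 + q ^ 2`; eliminating `r` and `p` gives the quartic.
  obtain ⟨r, hr⟩ : ∃ r, r = b - a := ⟨_, rfl⟩
  obtain ⟨s, hs⟩ : ∃ s, s = b + a := ⟨_, rfl⟩
  obtain ⟨p, hp⟩ : ∃ p, p = v + u := ⟨_, rfl⟩
  obtain ⟨q, hq⟩ : ∃ q, q = v - u := ⟨_, rfl⟩
  have e1 : r * s = p * q := by subst hr hs hp hq; linarith
  have e2 : (r + s) ^ 2 = p ^ 2 + q ^ 2 := by subst hr hs hp hq; linarith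
  have key : q ^ 4 - q ^ 2 * s ^ 2 + s ^ 4 = (r * q - p * s + q * s) ^ 2 := by
    linear_combination (s ^ 2 - q ^ 2) * e2 - (r * s - p * q + 2 * s ^ 2) * e1
  have hrs : r * s = 0 := by
    rcases quartic key with h0 | h0
    · rcases mul_eq_zero.1 h0 with h0 | h0
      · rw [e1, h0, mul_zero]
      · rw [h0, mul_zero]
    · have e3 : s ^ 2 * (r ^ 2 - p ^ 2) = 0 := by
        linear_combination (r * s + p * q) * e1 + p ^ 2 * h0
      rcases mul_eq_zero.1 e3 with h3 | h3
      · rw [pow_eq_zero_iff two_ne_zero |>.1 h3, mul_zero]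
      · have : 2 * (r * s) = 0 := by linear_combination e2 - h3 + h0
        linarith
  subst hr hs
  linear_combination -hrs

/-- Two coprime factors of a square are squares, not negatives of squares, when the first is
positive: the second is then automatically nonnegative. -/
lemma squares_of_coprime {m n w : ℤ} (hc : IsCoprime m n) (hm : 0 < m) (h : m * n = w ^ 2) :
    (∃ u, m = u ^ 2) ∧ ∃ v, n = v ^ 2 := by
  have hn : 0 ≤ n := nonneg_of_mul_nonneg_right (h ▸ sq_nonneg w) hm
  obtain ⟨u, hu⟩ := Int.sq_of_isCoprime hc h
  obtain ⟨v, hv⟩ := Int.sq_of_isCoprime hc.symm (by rw [mul_comm]; exact h)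
  refine ⟨⟨u, ?_⟩, v, ?_⟩
  · rcases hu with hu | hu
    · exact hu
    · nlinarith [sq_nonneg u]
  · rcases hv with hv | hv
    · exact hv
    · nlinarith [sq_nonneg v]

/-- The curve in homogeneous form, with `a / b` in lowest terms. -/
lemma integral_points {a b w : ℤ} (hc : IsCoprime a b)
    (h : (a ^ 2 + b ^ 2) * (3 * b ^ 2 - a ^ 2) = w ^ 2) : a ^ 2 = b ^ 2 := by
  have hpos : 0 < a ^ 2 + b ^ 2 := by
    have : a ≠ 0 ∨ b ≠ 0 := hc.ne_zero_or_ne_zero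
    rcases this with h0 | h0 <;> positivity
  obtain ⟨c, d, hcd⟩ := hc.pow (m := 2) (n := 2)
  -- The two factors generate an ideal containing `4`.
  have hbez : (a ^ 2 + b ^ 2) * (3 * c + d) + (3 * b ^ 2 - a ^ 2) * (d - c) = 4 := by
    linear_combination 4 * hcd
  rcases Int.even_or_odd (a ^ 2 + b ^ 2) with he | ho
  · obtain ⟨ha, hb⟩ : Odd a ∧ Odd b := by
      rcases Int.even_or_odd a with ha | ha <;> rcases Int.even_or_odd b with hb | hb
      · have := hc.isUnit_of_dvd' ha.two_dvd hb.two_dvd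
        norm_num [Int.isUnit_iff] at this
      · exact absurd he (Int.not_even_iff_odd.2 ((ha.pow_of_ne_zero two_ne_zero).add_odd hb.pow))
      · exact absurd he (Int.not_even_iff_odd.2 (ha.pow.add_even (hb.pow_of_ne_zero two_ne_zero)))
      · exact ⟨ha, hb⟩
    have ha4 : a ^ 2 % 4 = 1 := Int.sq_mod_four_eq_one_of_odd ha
    have hb4 : b ^ 2 % 4 = 1 := Int.sq_mod_four_eq_one_of_odd hb
    obtain ⟨m, hm⟩ : ∃ m, a ^ 2 + b ^ 2 = 2 * m := ⟨(a ^ 2 + b ^ 2) / 2, by omega⟩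
    obtain ⟨n, hn⟩ : ∃ n, 3 * b ^ 2 - a ^ 2 = 2 * n := ⟨(3 * b ^ 2 - a ^ 2) / 2, by omega⟩
    have hm2 : m % 2 = 1 := by omega
    have hmn : IsCoprime m n := by
      have h2 : IsCoprime m 2 := ⟨1, -(m / 2), by omega⟩
      have h3 : m * (3 * c + d) + n * (d - c) = 2 := by
        rw [hm, hn] at hbez; linarith
      obtain ⟨e, f, hef⟩ := h2
      exact ⟨e + f * (3 * c + d), f * (d - c), by linear_combination hef + f * h3⟩
    obtain ⟨w', rfl⟩ : (2 : ℤ) ∣ w := by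
      rw [← Int.pow_dvd_pow_iff two_ne_zero]
      exact ⟨m * n, by rw [← h, hm, hn]; ring⟩
    have h' : m * n = w' ^ 2 := by
      rw [hm, hn] at h; linarith
    obtain ⟨⟨u, rfl⟩, v, rfl⟩ := squares_of_coprime hmn (by omega) h'
    exact four_squares hm (by linarith)
  · exfalso
    have hmn : IsCoprime (a ^ 2 + b ^ 2) (3 * b ^ 2 - a ^ 2) := by
      have h2 : IsCoprime (a ^ 2 + b ^ 2) (2 ^ 2) :=
        IsCoprime.pow_right ⟨1, -((a ^ 2 + b ^ 2) / 2), by have := Int.odd_iff.1 ho; omega⟩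
      obtain ⟨e, f, hef⟩ := h2
      exact ⟨e + f * (3 * c + d), f * (d - c), by linear_combination hef + f * hbez⟩
    obtain ⟨-, v, hv⟩ := squares_of_coprime hmn hpos h
    -- `a ^ 2 + v ^ 2 = 3 * b ^ 2` forces `3` to divide `a`, `v` and then `b`.
    obtain ⟨⟨a', rfl⟩, v', rfl⟩ : (3 : ℤ) ∣ a ∧ (3 : ℤ) ∣ v :=
      three_dvd_of_sq_add_sq ⟨b ^ 2, by linarith⟩
    have hb : (3 : ℤ) ∣ b :=
      Int.prime_three.dvd_of_dvd_pow (n := 2) ⟨a' ^ 2 + v' ^ 2, by linarith⟩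
    have := hc.isUnit_of_dvd' (dvd_mul_right 3 a') hb
    norm_num [Int.isUnit_iff] at this

/-- the rational solutions of `t² = -η⁴ + 2η² + 3` are exactly `(±1, ±2)`. -/
theorem stmt_16 :
    {p : ℚ × ℚ | p.2^2 = -p.1^4 + 2*p.1^2 + 3} =
      {(1, 2), (1, -2), (-1, 2), (-1, -2)} := by
  ext ⟨x, t⟩
  simp only [Set.mem_ofPred_eq, Set.mem_insert_iff, Set.mem_singleton_iff, Prod.mk.injEq]
  constructor
  · intro h
    have hx : x ^ 2 = 1 := by
      have hb0 : (x.den : ℚ) ≠ 0 := by exact_mod_cast x.den_nz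
      have hd0 : (t.den : ℚ) ≠ 0 := by exact_mod_cast t.den_nz
      have hxe : x * x.den = x.num := Rat.mul_den_eq_num x
      have hte : t * t.den = t.num := Rat.mul_den_eq_num t
      have hco : IsCoprime x.num (x.den : ℤ) := Rat.isCoprime_num_den x
      generalize x.num = a at *
      have key : (t.num * (x.den : ℤ) ^ 2) ^ 2 =
          (t.den : ℤ) ^ 2 * ((a ^ 2 + (x.den : ℤ) ^ 2) * (3 * (x.den : ℤ) ^ 2 - a ^ 2)) := by
        have : ((t.num : ℚ) * (x.den : ℚ) ^ 2) ^ 2 =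
            (t.den : ℚ) ^ 2 * ((a ^ 2 + (x.den : ℚ) ^ 2) * (3 * (x.den : ℚ) ^ 2 - a ^ 2)) := by
          rw [← hxe, ← hte]
          linear_combination (t.den : ℚ) ^ 2 * (x.den : ℚ) ^ 4 * h
        exact_mod_cast this
      obtain ⟨w, hw⟩ : (t.den : ℤ) ∣ t.num * (x.den : ℤ) ^ 2 := by
        rw [← Int.pow_dvd_pow_iff two_ne_zero]
        exact ⟨_, key⟩
      have hd0' : (t.den : ℤ) ^ 2 ≠ 0 := by exact_mod_cast pow_ne_zero 2 t.den_nz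
      have hsq := integral_points (w := w) hco (by
        apply mul_left_cancel₀ hd0'
        rw [← key, hw]; ring)
      have hsq' : (a : ℚ) ^ 2 = (x.den : ℚ) ^ 2 := by exact_mod_cast hsq
      apply mul_right_cancel₀ (pow_ne_zero 2 hb0)
      rw [← mul_pow, hxe, hsq', one_mul]
    have ht : t ^ 2 = 2 ^ 2 := by linear_combination h + (1 - x ^ 2) * hx
    rcases sq_eq_sq_iff_eq_or_eq_neg.1 (hx.trans (one_pow 2).symm) with rfl | rfl <;>
      rcases sq_eq_sq_iff_eq_or_eq_neg.1 ht with rfl | rfl <;> simp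
  · rintro (⟨rfl, rfl⟩ | ⟨rfl, rfl⟩ | ⟨rfl, rfl⟩ | ⟨rfl, rfl⟩) <;> norm_num
end

section
/- The set of rational solutions (ν, t) ∈ ℚ × ℚ of the equation t² = 2(ν⁴ + 2ν³ − 2ν + 1) is exactly {(1, 2), (1, −2), (−1, 2), (−1, −2)}. -/
/-!
The proof is a descent along 2-isogenies, carried out with elementary integer arithmetic.

Write `ν = (u + v) / (u - v)` with `u, v` coprime of opposite parity. The equation becomes
`w² = (u² + 2uv - v²)² + (2uv)²`, a primitive Pythagorean triple, and the claim is that `uv = 0`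
(that is, `ν = ±1`). Parametrizing the triple gives coprime `m, n` with `mn = uv` and
`m² - n² = u² + 2uv - v²`. Splitting the four factors as `u = ab`, `v = cd`, `m = ac`, `n = bd`
turns this into `(a² + d²)(b² - c²) = -2abcd`, and coprimality forces `a² + d² = ±bc` and
`b² - c² = ∓2ad`. Hence `(a² + d²)² + (ad)²` is the square of `(b² + c²) / 2`
(`quartic_of_ne_zero`).

It remains to see that `(a² + d²)² + (ad)² = y²` with `a, d` coprime forces `ad = 0`
(`quartic_eq_zero`). The left side is again the sum of two squares in a primitive Pythagorean
triple; the same splitting of factors leads to `h² + i² = k g²`, `i² - 4h² = k j²` with `k ∣ 5`.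
The case `k = 5` is impossible modulo 8, and for `k = 1` the triple `j² + (2h)² = i²` is
parametrized by `p, q` with `pq = h` and `(p² + q²)² + (pq)² = g²`, a smaller solution of the same
equation (`quartic_descent`).
-/

/-- Equal products `xy = zw` have a common refinement into four factors. -/
lemma four_factors {x y z w : ℤ} (hx : x ≠ 0) (h : x * y = z * w) :
    ∃ a b c d : ℤ, x = a * b ∧ y = c * d ∧ z = a * c ∧ w = b * d := by
  obtain ⟨a, b, ⟨c, hc⟩, ⟨d, hd⟩, hab⟩ := exists_dvd_and_dvd_of_dvd_mul (Dvd.intro y h)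
  refine ⟨a, b, c, d, hab, ?_, hc, hd⟩
  apply mul_left_cancel₀ hx
  rw [h, hc, hd, hab]
  ring

/-- Parametrization of primitive Pythagorean triples whose first leg is odd. -/
lemma pyth_param {x y z : ℤ} (h : x ^ 2 + y ^ 2 = z ^ 2) (hc : IsCoprime x y) (hx : Odd x) :
    ∃ m n : ℤ, x = m ^ 2 - n ^ 2 ∧ y = 2 * m * n ∧ IsCoprime m n ∧
      z ^ 2 = (m ^ 2 + n ^ 2) ^ 2 := by
  have hp : PythagoreanTriple x y z := by
    unfold PythagoreanTriple
    linarith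
  obtain ⟨m, n, hxy, hz, hmn, -⟩ :=
    PythagoreanTriple.coprime_classification.mp ⟨hp, Int.isCoprime_iff_gcd_eq_one.mp hc⟩
  rcases hxy with ⟨h1, h2⟩ | ⟨h1, h2⟩
  · refine ⟨m, n, h1, h2, Int.isCoprime_iff_gcd_eq_one.mpr hmn, ?_⟩
    rcases hz with rfl | rfl <;> ring
  · exfalso
    rw [h1, mul_assoc] at hx
    exact (Int.not_even_iff_odd.mpr hx) (even_two_mul _)

lemma isCoprime_sq_add_sq_mul {a d : ℤ} (h : IsCoprime a d) :
    IsCoprime (a ^ 2 + d ^ 2) (a * d) := by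
  apply IsCoprime.mul_right
  · have : IsCoprime (d ^ 2 + a * a) a := (h.symm.pow_left (m := 2)).add_mul_left_left a
    convert this using 1
    ring
  · have : IsCoprime (a ^ 2 + d * d) d := (h.pow_left (m := 2)).add_mul_left_left d
    convert this using 1
    ring

/-- The descent step: a solution with `a` even and nonzero yields one with strictly smaller
product. -/
lemma quartic_descent_s17 {a d y : ℤ} (hc : IsCoprime a d) (ha : Even a) (ha0 : a ≠ 0)
    (h : (a ^ 2 + d ^ 2) ^ 2 + (a * d) ^ 2 = y ^ 2) :
    ∃ p q z : ℤ, IsCoprime p q ∧ p * q ≠ 0 ∧ (p * q).natAbs < (a * d).natAbs ∧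
      (p ^ 2 + q ^ 2) ^ 2 + (p * q) ^ 2 = z ^ 2 := by
  obtain ⟨a', rfl⟩ := ha.two_dvd
  have hd : Odd d := by
    rw [← Int.isCoprime_two_left]
    exact hc.of_mul_left_left
  have ha' : a' ≠ 0 := by
    rintro rfl
    simp at ha0
  obtain ⟨r, s, hr, hs, hrs, -⟩ := pyth_param h (isCoprime_sq_add_sq_mul hc)
    (((ha.pow_of_ne_zero two_ne_zero)).add_odd hd.pow)
  obtain ⟨g, h', i, j, rfl, rfl, rfl, rfl⟩ := four_factors (x := a') (y := d) (z := r) (w := s)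
    ha' (by linarith)
  have hg0 : g ≠ 0 := left_ne_zero_of_mul ha'
  have hh0 : h' ≠ 0 := right_ne_zero_of_mul ha'
  have hc' : IsCoprime (g * h') (i * j) := hc.of_mul_left_right
  have hgj : IsCoprime g j := hc'.of_mul_left_left.of_mul_right_right
  have hhi : IsCoprime h' i := hc'.of_mul_left_right.of_mul_right_left
  have hhj : IsCoprime h' j := hc'.of_mul_left_right.of_mul_right_right
  have hi : Odd i := (Int.odd_mul.mp hd).1
  have hj : Odd j := (Int.odd_mul.mp hd).2
  have key : g ^ 2 * (i ^ 2 - 4 * h' ^ 2) = j ^ 2 * (h' ^ 2 + i ^ 2) := by linarith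
  obtain ⟨k, hk⟩ : g ^ 2 ∣ h' ^ 2 + i ^ 2 :=
    (hgj.pow (m := 2) (n := 2)).dvd_of_dvd_mul_left (Dvd.intro _ key)
  have hk' : i ^ 2 - 4 * h' ^ 2 = j ^ 2 * k := by
    apply mul_left_cancel₀ (pow_ne_zero 2 hg0)
    rw [key, hk]
    ring
  have hk5 : k ∣ 5 := by
    have h1 : k ∣ 5 * h' ^ 2 := ⟨g ^ 2 - j ^ 2, by linarith⟩
    have h2 : k ∣ 5 * i ^ 2 := ⟨4 * g ^ 2 + j ^ 2, by linarith⟩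
    obtain ⟨α, β, hαβ⟩ := hhi.pow (m := 2) (n := 2)
    have h3 : (5 : ℤ) = α * (5 * h' ^ 2) + β * (5 * i ^ 2) := by linear_combination -5 * hαβ
    rw [h3]
    exact dvd_add (h1.mul_left _) (h2.mul_left _)
  have hkpos : 0 < k := by
    by_contra! hneg
    have : 0 < h' ^ 2 := by positivity
    nlinarith [sq_nonneg i, sq_nonneg g]
  have hk15 : k = 1 ∨ k = 5 := by
    have : k ≤ 5 := Int.le_of_dvd (by norm_num) hk5
    interval_cases k <;> revert hk5 <;> decide
  rcases hk15 with rfl | rfl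
  · obtain ⟨p, q, -, hpq, hcpq, hi2⟩ := pyth_param (x := j) (y := 2 * h') (z := i)
      (by linarith) ((Int.isCoprime_two_right.mpr hj).mul_right hhj.symm) hj
    obtain rfl : h' = p * q := by linarith
    refine ⟨p, q, g, hcpq, hh0, ?_, by linarith⟩
    have hij : i * j ≠ 0 := fun h0 => by simp [h0] at hd
    have e : 2 * (g * (p * q)) * (i * j) = (p * q) * (2 * (g * (i * j))) := by ring
    rw [e, Int.natAbs_mul (p * q), Int.natAbs_mul 2]
    have h1 : 0 < (p * q).natAbs := Int.natAbs_pos.mpr hh0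
    have h2 : 0 < (g * (i * j)).natAbs := Int.natAbs_pos.mpr (mul_ne_zero hg0 hij)
    have h3 : (2 : ℤ).natAbs = 2 := rfl
    rw [h3]
    nlinarith
  · -- `4h² = i² - 5j²` with `i, j` odd makes `h` odd, so `h² + i² = 5g²` is `2` modulo `4`.
    exfalso
    obtain ⟨i', rfl⟩ := hi
    obtain ⟨j', rfl⟩ := hj
    obtain ⟨x, hx⟩ := (Int.even_mul_succ_self i').two_dvd
    obtain ⟨z, hz⟩ := (Int.even_mul_succ_self j').two_dvd
    rcases Int.even_or_odd' h' with ⟨e, rfl | rfl⟩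
    · have : 4 * (8 * x - 40 * z - 16 * e ^ 2) = 16 := by nlinarith
      omega
    · rcases Int.even_or_odd' g with ⟨f, rfl | rfl⟩ <;> ring_nf at hk <;> omega

/-- Infinite descent on `|ad|`: the equation `(a² + d²)² + (ad)² = y²` has only trivial coprime
solutions. -/
lemma quartic_eq_zero (N : ℕ) : ∀ a d y : ℤ, (a * d).natAbs = N → IsCoprime a d →
    (a ^ 2 + d ^ 2) ^ 2 + (a * d) ^ 2 = y ^ 2 → a * d = 0 := by
  induction N using Nat.strong_induction_on with
  | _ N ih =>
    intro a d y hN hc h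
    by_contra h0
    rcases Int.even_or_odd a with ha | ha
    · obtain ⟨p, q, z, hpq, hne, hlt, hz⟩ := quartic_descent_s17 hc ha (left_ne_zero_of_mul h0) h
      exact hne (ih _ (hN ▸ hlt) p q z rfl hpq hz)
    · rcases Int.even_or_odd d with hd | hd
      · obtain ⟨p, q, z, hpq, hne, hlt, hz⟩ := quartic_descent_s17 (y := y) hc.symm hd
          (right_ne_zero_of_mul h0) (by linarith)
        rw [mul_comm d a] at hlt
        exact hne (ih _ (hN ▸ hlt) p q z rfl hpq hz)
      · -- For `a, d` odd the left side is `5` modulo `8`.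
        obtain ⟨a', rfl⟩ := ha
        obtain ⟨d', rfl⟩ := hd
        obtain ⟨x, hx⟩ := (Int.even_mul_succ_self a').two_dvd
        obtain ⟨z, hz⟩ := (Int.even_mul_succ_self d').two_dvd
        have e1 : (2 * a' + 1) ^ 2 = 8 * x + 1 := by linarith
        have e2 : (2 * d' + 1) ^ 2 = 8 * z + 1 := by linarith
        rw [mul_pow, e1, e2] at h
        rcases Int.even_or_odd' y with ⟨f, rfl | rfl⟩
        · ring_nf at h
          omega
        · obtain ⟨t, ht⟩ := (Int.even_mul_succ_self f).two_dvd
          have e3 : (2 * f + 1) ^ 2 = 8 * t + 1 := by linarith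
          rw [e3] at h
          ring_nf at h
          omega

/-- The first half of the descent: a nontrivial point on the quartic in `u, v` produces a
nontrivial coprime solution of `(a² + d²)² + (ad)² = y²`. -/
lemma quartic_of_ne_zero {u v w : ℤ} (hc : IsCoprime u v) (hodd : Odd (u + v)) (h0 : u * v ≠ 0)
    (h : (u ^ 2 + 2 * u * v - v ^ 2) ^ 2 + (2 * u * v) ^ 2 = w ^ 2) :
    ∃ a d y : ℤ, IsCoprime a d ∧ a * d ≠ 0 ∧ (a ^ 2 + d ^ 2) ^ 2 + (a * d) ^ 2 = y ^ 2 := by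
  have hxodd : Odd (u ^ 2 + 2 * u * v - v ^ 2) := by
    have e : u ^ 2 + 2 * u * v - v ^ 2 = (u + v) ^ 2 - 2 * v ^ 2 := by ring
    rw [e]
    exact (hodd.pow).sub_even (even_two_mul _)
  have hxu : IsCoprime (u ^ 2 + 2 * u * v - v ^ 2) u := by
    have : IsCoprime (-v ^ 2 + u * (u + 2 * v)) u :=
      (hc.symm.pow_left (m := 2)).neg_left.add_mul_left_left _
    convert this using 1
    ring
  have hxv : IsCoprime (u ^ 2 + 2 * u * v - v ^ 2) v := by
    have : IsCoprime (u ^ 2 + v * (2 * u - v)) v := (hc.pow_left (m := 2)).add_mul_left_left _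
    convert this using 1
    ring
  obtain ⟨m, n, hm, hn, hmn, -⟩ := pyth_param h
    (((Int.isCoprime_two_right.mpr hxodd).mul_right hxu).mul_right hxv) hxodd
  obtain ⟨a, b, c, d, rfl, rfl, rfl, rfl⟩ := four_factors (x := u) (y := v) (z := m) (w := n)
    (left_ne_zero_of_mul h0) (by linarith)
  have hac : IsCoprime a c := hc.of_mul_left_left.of_mul_right_left
  have had : IsCoprime a d := hc.of_mul_left_left.of_mul_right_right
  have hbc : IsCoprime b c := hc.of_mul_left_right.of_mul_right_left
  have hbd : IsCoprime b d := hc.of_mul_left_right.of_mul_right_right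
  have hab : IsCoprime a b := hmn.of_mul_left_left.of_mul_right_left
  have hcd : IsCoprime c d := hmn.of_mul_left_right.of_mul_right_right
  have hb0 : b ≠ 0 := right_ne_zero_of_mul (left_ne_zero_of_mul h0)
  have hc0 : c ≠ 0 := left_ne_zero_of_mul (right_ne_zero_of_mul h0)
  have had0 : a * d ≠ 0 := mul_ne_zero (left_ne_zero_of_mul (left_ne_zero_of_mul h0))
    (right_ne_zero_of_mul (right_ne_zero_of_mul h0))
  have key : (a ^ 2 + d ^ 2) * (b ^ 2 - c ^ 2) = -2 * (a * d) * (b * c) := by linarith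
  have hb : IsCoprime b (b ^ 2 - c ^ 2) := by
    have : IsCoprime b (-c ^ 2 + b * b) := (hbc.pow_right (n := 2)).neg_right.add_mul_left_right _
    convert this using 1
    ring
  have hcc : IsCoprime c (b ^ 2 - c ^ 2) := by
    have : IsCoprime c (b ^ 2 + c * (-c)) := (hbc.symm.pow_right (n := 2)).add_mul_left_right _
    convert this using 1
    ring
  obtain ⟨k, hk⟩ : b * c ∣ a ^ 2 + d ^ 2 :=
    (hb.mul_left hcc).dvd_of_dvd_mul_right (Dvd.intro_left _ key.symm)
  have hk' : k * (b ^ 2 - c ^ 2) = -2 * (a * d) := by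
    apply mul_left_cancel₀ (mul_ne_zero hb0 hc0)
    rw [← mul_assoc, ← hk, key]
    ring
  have hk2 : k ∣ 2 := by
    have h1 : IsCoprime k (a * d) :=
      (isCoprime_sq_add_sq_mul had).of_isCoprime_of_dvd_left (Dvd.intro_left _ hk.symm)
    exact h1.dvd_of_dvd_mul_right ⟨-(b ^ 2 - c ^ 2), by linarith⟩
  have hkcases : k ^ 2 = 1 ∨ k = 2 ∨ k = -2 := by
    have h1 : k ≤ 2 := Int.le_of_dvd (by norm_num) hk2
    have h2 : -k ≤ 2 := Int.le_of_dvd (by norm_num) ((neg_dvd).mpr hk2)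
    have h3 : -2 ≤ k := by linarith
    interval_cases k <;> revert hk2 <;> decide
  have hk_odd : ¬ (k = 2 ∨ k = -2) := by
    intro hk3
    -- `a, d` are then both odd, `bc` is even, and `a² + d² = ±2bc` fails modulo `4`.
    have hodd2 : Odd a ∧ Odd d := by
      have hev : Even (a ^ 2 + d ^ 2) := by
        rw [hk]
        rcases hk3 with rfl | rfl <;> simp [parity_simps]
      rw [← Int.not_even_iff_odd, ← Int.not_even_iff_odd]
      have hnot : ¬ (Even a ∧ Even d) := fun ⟨h1, h2⟩ => by
        have := had.isUnit_of_dvd' h1.two_dvd h2.two_dvd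
        revert this
        decide
      simp only [parity_simps] at hev
      tauto
    have hbcE : Even (b * c) := by
      have : Odd (b ^ 2 - c ^ 2) := by
        have ho : Odd (a * d) := hodd2.1.mul hodd2.2
        rcases hk3 with rfl | rfl
        · have : b ^ 2 - c ^ 2 = -(a * d) := by linarith
          rw [this]
          exact ho.neg
        · have : b ^ 2 - c ^ 2 = a * d := by linarith
          rwa [this]
      rw [← Int.not_even_iff_odd] at this
      simp only [parity_simps] at this ⊢
      tauto
    obtain ⟨e, he⟩ := hbcE.two_dvd
    obtain ⟨⟨a', rfl⟩, ⟨d', rfl⟩⟩ := hodd2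
    rw [he] at hk
    rcases hk3 with rfl | rfl <;> ring_nf at hk <;> omega
  have hk1 : k ^ 2 = 1 := hkcases.resolve_right hk_odd
  have hsq : (b ^ 2 - c ^ 2) ^ 2 = 4 * (a * d) ^ 2 := by
    have : (k * (b ^ 2 - c ^ 2)) ^ 2 = 4 * (a * d) ^ 2 := by rw [hk']; ring
    rwa [mul_pow, hk1, one_mul] at this
  have hsum : (a ^ 2 + d ^ 2) ^ 2 = (b * c) ^ 2 := by
    rw [hk, mul_pow, hk1, mul_one]
  have hev : Even (b ^ 2 + c ^ 2) := by
    have : Even ((b ^ 2 - c ^ 2) ^ 2) := ⟨2 * (a * d) ^ 2, by rw [hsq]; ring⟩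
    simp only [parity_simps] at this ⊢
    tauto
  obtain ⟨y, hy⟩ := hev.two_dvd
  refine ⟨a, d, y, had, had0, ?_⟩
  have : (b ^ 2 + c ^ 2) ^ 2 = 4 * y ^ 2 := by rw [hy]; ring
  linarith

/-- The homogeneous form of the equation, with `ν = p / q` in lowest terms. -/
lemma integral_points_s17 {p q s : ℤ} (hc : IsCoprime p q)
    (h : s ^ 2 = 2 * (p ^ 4 + 2 * p ^ 3 * q - 2 * p * q ^ 3 + q ^ 4)) : p = q ∨ p = -q := by
  have hs : Even s := by
    have : Even (s ^ 2) := h ▸ even_two_mul _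
    exact (Int.even_pow.mp this).1
  obtain ⟨s', rfl⟩ := hs.two_dvd
  have hodd : Odd p ∧ Odd q := by
    have hev : Even (p ^ 4 + q ^ 4) := ⟨s' ^ 2 - p ^ 3 * q + p * q ^ 3, by linarith⟩
    have hnot : ¬ (Even p ∧ Even q) := fun ⟨h1, h2⟩ => by
      have := hc.isUnit_of_dvd' h1.two_dvd h2.two_dvd
      revert this
      decide
    rw [← Int.not_even_iff_odd, ← Int.not_even_iff_odd]
    simp only [parity_simps] at hev
    tauto
  obtain ⟨u, hu⟩ := (hodd.1.add_odd hodd.2).two_dvd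
  obtain ⟨v, hv⟩ := (hodd.1.sub_odd hodd.2).two_dvd
  obtain rfl : p = u + v := by linarith
  obtain rfl : q = u - v := by linarith
  have huv : IsCoprime u v := by
    obtain ⟨α, β, hαβ⟩ := hc
    exact ⟨α + β, α - β, by linarith⟩
  by_cases h0 : u * v = 0
  · rcases mul_eq_zero.mp h0 with rfl | rfl
    · right; ring
    · left; ring
  · obtain ⟨a, d, y, had, hne, hy⟩ :=
      quartic_of_ne_zero (w := s') huv hodd.1 h0 (by linarith)
    exact absurd (quartic_eq_zero _ a d y rfl had hy) hne

/-- the rational solutions of `t² = 2(ν⁴ + 2ν³ - 2ν + 1)` are exactly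
`(±1, ±2)`. -/
theorem stmt_17 :
    {p : ℚ × ℚ | p.2^2 = 2*(p.1^4 + 2*p.1^3 - 2*p.1 + 1)} =
      {(1, 2), (1, -2), (-1, 2), (-1, -2)} := by
  ext ⟨ν, t⟩
  simp only [Set.mem_ofPred_eq, Set.mem_insert_iff, Set.mem_singleton_iff, Prod.mk.injEq]
  constructor
  · intro h
    have hq : (ν.den : ℚ) ≠ 0 := Nat.cast_ne_zero.mpr ν.den_nz
    have hν : ν * ν.den = ν.num := Rat.mul_den_eq_num ν
    set p : ℤ := ν.num with hp
    set q : ℤ := (ν.den : ℤ) with hqd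
    have hqq : (ν.den : ℚ) = (q : ℚ) := by simp [hqd]
    rw [hqq] at hq hν
    have hts : (t * q ^ 2) ^ 2
        = ((2 * (p ^ 4 + 2 * p ^ 3 * q - 2 * p * q ^ 3 + q ^ 4) : ℤ) : ℚ) := by
      push_cast
      rw [← hν, mul_pow, h]
      ring
    -- `t q²` is a rational number with integral square, hence an integer.
    obtain ⟨s, hs⟩ := Rat.isSquare_intCast_iff.mp ⟨t * q ^ 2, hts.symm.trans (sq _)⟩
    have hc : IsCoprime p q := by
      rw [Int.isCoprime_iff_gcd_eq_one]
      exact ν.reduced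
    have hν1 : ν = 1 ∨ ν = -1 := by
      rcases integral_points_s17 hc ((sq s).trans hs.symm) with e | e
      · left
        apply mul_right_cancel₀ hq
        rw [hν, e, one_mul]
      · right
        apply mul_right_cancel₀ hq
        rw [hν, e]
        push_cast
        ring
    have ht : t = 2 ∨ t = -2 := by
      apply sq_eq_sq_iff_eq_or_eq_neg.mp
      rw [h]
      rcases hν1 with e | e <;> rw [e] <;> norm_num
    tauto
  · rintro (⟨rfl, rfl⟩ | ⟨rfl, rfl⟩ | ⟨rfl, rfl⟩ | ⟨rfl, rfl⟩) <;> norm_num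
end
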